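/- Let q be a prime power with q ≥ 5 and let P be a closed point of degree 3 of P² over F_q not contained in any F_q-rational line, given by a point p ∈ P²(F_{q³}) whose Frobenius orbit {p, φ(p), φ²(p)} has exactly 3 elements, these three points being non-collinear. Then there exists a nonzero homogeneous polynomial f ∈ F_q[x,y,z] of degree 5 vanishing at p such that the number of points [a:b:c] ∈ P²(F_q) with f(a,b,c) = 0 is exactly 4q + 2. -/

import Mathlib

open MvPolynomial

noncomputable section

/-!
Since `v` is a basis of the cubic extension `E` over `F`, a linear change of coordinates over `F`
turns it into `(1, θ, θ²)` for a primitive element `θ`, and this point lies on the conic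
`x₀x₂ = x₁²`, which has `q + 1` rational points. The line `x₂ + b x₁ + m x₀ = 0` misses all of
them exactly when `r² + b r + m` has no root in `F`. For a suitable `m` at least half of all `b`
have this property, because `b` is excluded iff `-b` is a value of `r ↦ r + m / r`, a map on `Fˣ`
that is constant on the orbits of the involution `r ↦ m / r`. For this `m`, all the lines pass
through `[1 : 0 : -m]`, so `k ≥ 1` of them have `k q + 1` rational points. The conic together with
three of them is a quintic with `(q + 1) + (3 q + 1)` rational points.
-/

open scoped LinearAlgebra.Projectivization Finset Matrix

theorem eval_smul_of_isHomogeneous {R σ : Type*} [CommSemiring R] {f : MvPolynomial σ R} {n : ℕ}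
    (hf : f.IsHomogeneous n) (a : R) (w : σ → R) : eval (a • w) f = a ^ n * eval w f := by
  rw [eval_eq, eval_eq, Finset.mul_sum]
  refine Finset.sum_congr rfl fun d hd ↦ ?_
  have hdeg : ∑ i ∈ d.support, d i = n := by
    simp [← hf (mem_support_iff.mp hd), Finsupp.weight_apply, Finsupp.sum]
  simp only [Pi.smul_apply, smul_eq_mul, mul_pow, Finset.prod_mul_distrib,
    Finset.prod_pow_eq_pow_sum, hdeg]
  ring

section RationalPoints

variable {F σ : Type*} [Field F]

/-- The set of `F`-rational points of the projective hypersurface `f = 0`. Membership is tested on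
the chosen representative of a point, so this is meaningful for homogeneous `f` only. -/
def rationalPoints (f : MvPolynomial σ F) : Set (ℙ F (σ → F)) :=
  {x | eval x.rep f = 0}

theorem mk_mem_rationalPoints_iff {f : MvPolynomial σ F} {n : ℕ} (hf : f.IsHomogeneous n)
    {w : σ → F} (hw : w ≠ 0) : .mk F w hw ∈ rationalPoints f ↔ eval w f = 0 := by
  obtain ⟨a, ha⟩ := Projectivization.exists_smul_eq_mk_rep F w hw
  rw [rationalPoints, Set.mem_ofPred_eq, ← ha, Units.smul_def, eval_smul_of_isHomogeneous hf]
  simp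

theorem rationalPoints_mul (f g : MvPolynomial σ F) :
    rationalPoints (f * g) = rationalPoints f ∪ rationalPoints g := by
  ext x
  simp [rationalPoints]

theorem ncard_rationalPoints_of_parametrization {ι : Type*} {f : MvPolynomial σ F} {n : ℕ}
    (hf : f.IsHomogeneous n) {γ : ι → σ → F} (hγ : ∀ t, γ t ≠ 0)
    (hinj : ∀ s t (a : F), a • γ s = γ t → s = t)
    (hzero : ∀ w, eval w f = 0 ↔ ∃ t, ∃ a : F, a • γ t = w) :
    (rationalPoints f).ncard = Nat.card ι := by
  let P : ι → ℙ F (σ → F) := fun t ↦ .mk F (γ t) (hγ t)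
  have hP : P.Injective := fun s t h ↦ by
    obtain ⟨a, ha⟩ := (Projectivization.mk_eq_mk_iff' F _ _ _ _).mp h
    exact (hinj t s a ha).symm
  have hrange : rationalPoints f = Set.range P := by
    ext x
    induction x with | h w hw =>
    rw [mk_mem_rationalPoints_iff hf, hzero, Set.mem_range]
    refine exists_congr fun t ↦ ?_
    rw [eq_comm, Projectivization.mk_eq_mk_iff']
  rw [hrange, ← Nat.card_coe_set_eq, Nat.card_range_of_injective hP]

end RationalPoints

section LinearSubstitution

variable {R σ ι : Type*} [CommRing R] [Fintype σ]

theorem aeval_bind₁_toMvPolynomial {A : Type*} [CommRing A] [Algebra R A] (M : Matrix ι σ R)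
    (f : MvPolynomial ι R) (v : σ → A) :
    aeval v (bind₁ M.toMvPolynomial f) = aeval (M.map (algebraMap R A) *ᵥ v) f := by
  rw [aeval_bind₁]
  congr 2
  ext i
  rw [← Matrix.toMvPolynomial_eval_eq_apply, Matrix.toMvPolynomial_map, eval_map, aeval_def]

theorem eval_bind₁_toMvPolynomial (M : Matrix ι σ R) (f : MvPolynomial ι R) (w : σ → R) :
    eval w (bind₁ M.toMvPolynomial f) = eval (M *ᵥ w) f := by
  simpa [aeval_eq_eval] using aeval_bind₁_toMvPolynomial M f w

theorem isHomogeneous_bind₁_toMvPolynomial (M : Matrix ι σ R) {f : MvPolynomial ι R} {n : ℕ}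
    (hf : f.IsHomogeneous n) : (bind₁ M.toMvPolynomial f).IsHomogeneous n := by
  simpa using hf.aeval _ M.toMvPolynomial_isHomogeneous

theorem bind₁_toMvPolynomial_injective [DecidableEq σ] {M : Matrix σ σ R} (hM : IsUnit M) :
    Function.Injective (bind₁ M.toMvPolynomial) := by
  obtain ⟨N, hN⟩ := hM.exists_right_inv
  refine Function.LeftInverse.injective (g := bind₁ N.toMvPolynomial) fun f ↦ ?_
  rw [bind₁_bind₁]
  simp only [← Matrix.toMvPolynomial_mul, hN, Matrix.toMvPolynomial_one, bind₁_X_left,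
    AlgHom.id_apply]

theorem ncard_rationalPoints_bind₁_toMvPolynomial {F : Type*} [Field F] [DecidableEq σ]
    {M : Matrix σ σ F} (hM : IsUnit M) {f : MvPolynomial σ F} {n : ℕ} (hf : f.IsHomogeneous n) :
    (rationalPoints (bind₁ M.toMvPolynomial f)).ncard = (rationalPoints f).ncard := by
  have hinj : Function.Injective M.mulVecLin := Matrix.mulVec_injective_iff_isUnit.mpr hM
  have hsurj : Function.Surjective M.mulVecLin := Matrix.mulVec_surjective_iff_isUnit.mpr hM
  have hpre : rationalPoints (bind₁ M.toMvPolynomial f) =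
      Projectivization.map M.mulVecLin hinj ⁻¹' rationalPoints f := by
    ext x
    induction x with | h w hw =>
    rw [Set.mem_preimage, Projectivization.map_mk, mk_mem_rationalPoints_iff hf,
      mk_mem_rationalPoints_iff (isHomogeneous_bind₁_toMvPolynomial M hf),
      eval_bind₁_toMvPolynomial, Matrix.mulVecLin_apply]
  rw [hpre]
  refine Set.ncard_preimage_of_injective_subset_range (Projectivization.map_injective _ hinj) ?_
  rintro y -
  induction y with | h w hw =>
  obtain ⟨u, rfl⟩ := hsurj w
  exact ⟨.mk F u (by rintro rfl; simp at hw), Projectivization.map_mk _ _ _ _⟩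

end LinearSubstitution

section ConicAndPencil

variable {F : Type*} [Field F]

variable (F) in
/-- The smooth conic `x₀x₂ = x₁²`, which is the image of `[s : t] ↦ [s² : st : t²]`. -/
def standardConic : MvPolynomial (Fin 3) F :=
  X 0 * X 2 - X 1 ^ 2

/-- The product of the linear forms `x₂ + b x₁ + m x₀` for `b ∈ B`, whose zeros form a pencil of
lines through the point `[1 : 0 : -m]`. -/
def linePencil (m : F) (B : Finset F) : MvPolynomial (Fin 3) F :=
  ∏ b ∈ B, (X 2 + C b * X 1 + C m * X 0)

theorem eval_standardConic (w : Fin 3 → F) :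
    eval w (standardConic F) = w 0 * w 2 - w 1 ^ 2 := by
  simp [standardConic]

theorem isHomogeneous_standardConic : (standardConic F).IsHomogeneous 2 :=
  ((isHomogeneous_X F 0).mul (isHomogeneous_X F 2)).sub (isHomogeneous_X_pow 1 2)

theorem standardConic_ne_zero : standardConic F ≠ 0 := fun h ↦ by
  simpa [h] using eval_standardConic (F := F) ![0, 1, 0]

theorem aeval_pow_standardConic {E : Type*} [CommRing E] [Algebra F E] (θ : E) :
    aeval (fun i : Fin 3 ↦ θ ^ (i : ℕ)) (standardConic F) = 0 := by
  simp [standardConic]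

theorem eval_linePencil_eq_zero_iff {m : F} {B : Finset F} {w : Fin 3 → F} :
    eval w (linePencil m B) = 0 ↔ ∃ b ∈ B, w 2 + b * w 1 + m * w 0 = 0 := by
  simp [linePencil, Finset.prod_eq_zero_iff]

theorem isHomogeneous_linePencil (m : F) (B : Finset F) : (linePencil m B).IsHomogeneous #B := by
  simpa [linePencil] using IsHomogeneous.prod B _ (fun _ ↦ 1) fun b _ ↦
    ((isHomogeneous_X F 2).add (isHomogeneous_C_mul_X b 1)).add (isHomogeneous_C_mul_X m 0)

theorem linePencil_ne_zero (m : F) (B : Finset F) : linePencil m B ≠ 0 := fun h ↦ by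
  simpa [h] using eval_linePencil_eq_zero_iff (m := m) (B := B) (w := ![0, 0, 1])

theorem ncard_rationalPoints_standardConic [Fintype F] :
    (rationalPoints (standardConic F)).ncard = Fintype.card F + 1 := by
  let γ : Option F → Fin 3 → F := fun t ↦ t.elim ![0, 0, 1] fun t ↦ ![1, t, t ^ 2]
  rw [ncard_rationalPoints_of_parametrization (γ := γ) isHomogeneous_standardConic,
    Nat.card_eq_fintype_card, Fintype.card_option]
  · rintro (_ | t) <;> simp [γ]
  · rintro (_ | s) (_ | t) a <;> simp +contextual [γ]
  · intro w
    rw [eval_standardConic]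
    constructor
    · intro hw
      by_cases h0 : w 0 = 0
      · exact ⟨none, w 2, by ext i; fin_cases i <;> simp_all [γ]⟩
      · have h1 : w 0 * (w 1 / w 0) = w 1 := mul_div_cancel₀ _ h0
        have h2 : w 0 * (w 1 / w 0) ^ 2 = w 2 := by
          field_simp
          linear_combination -hw
        exact ⟨some (w 1 / w 0), w 0, by ext i; fin_cases i <;> simp [γ, h1, h2]⟩
    · rintro ⟨_ | t, a, rfl⟩
      · simp [γ]
      · simp only [γ, Option.elim_some, Matrix.smul_vec3, Matrix.cons_val, smul_eq_mul]
        ring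

theorem ncard_rationalPoints_linePencil [Fintype F] (m : F) {B : Finset F} (hB : B.Nonempty) :
    (rationalPoints (linePencil m B)).ncard = #B * Fintype.card F + 1 := by
  let γ : Option (B × F) → Fin 3 → F := fun t ↦ t.elim ![1, 0, -m] fun (b, y) ↦ ![y, 1, -b - m * y]
  rw [ncard_rationalPoints_of_parametrization (γ := γ) (isHomogeneous_linePencil m B),
    Nat.card_eq_fintype_card, Fintype.card_option, Fintype.card_prod, Fintype.card_coe]
  · rintro (_ | ⟨b, y⟩) <;> simp [γ]
  · rintro (_ | ⟨b, y⟩) (_ | ⟨c, z⟩) a <;>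
      simp only [γ, Option.elim_none, Option.elim_some, Matrix.smul_vec3, Matrix.vecCons_inj,
        smul_eq_mul] <;> grind
  · intro w
    rw [eval_linePencil_eq_zero_iff]
    constructor
    · rintro ⟨b, hb, hw⟩
      by_cases h1 : w 1 = 0
      · have h2 : -(w 0 * m) = w 2 := by linear_combination -hw + b * h1
        exact ⟨none, w 0, by ext i; fin_cases i <;> simp [γ, h1, h2]⟩
      · have h0 : w 1 * (w 0 / w 1) = w 0 := mul_div_cancel₀ _ h1
        have h2 : w 1 * (-b - m * (w 0 / w 1)) = w 2 := by linear_combination -hw - m * h0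
        exact ⟨some (⟨b, hb⟩, w 0 / w 1), w 1, by ext i; fin_cases i <;> simp [γ, h0, h2]⟩
    · obtain ⟨b₀, hb₀⟩ := hB
      rintro ⟨_ | ⟨⟨b, hb⟩, y⟩, a, rfl⟩
      · refine ⟨b₀, hb₀, ?_⟩
        simp only [γ, Option.elim_none, Matrix.smul_vec3, Matrix.cons_val, smul_eq_mul]
        ring
      · refine ⟨b, hb, ?_⟩
        simp only [γ, Option.elim_some, Matrix.smul_vec3, Matrix.cons_val, smul_eq_mul]
        ring

theorem disjoint_rationalPoints_standardConic_linePencil {m : F} {B : Finset F}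
    (hB : ∀ b ∈ B, ∀ r : F, r ^ 2 + b * r + m ≠ 0) :
    Disjoint (rationalPoints (standardConic F)) (rationalPoints (linePencil m B)) := by
  rw [Set.disjoint_left]
  intro x hconic hpencil
  induction x with | h w hw =>
  rw [mk_mem_rationalPoints_iff isHomogeneous_standardConic, eval_standardConic] at hconic
  rw [mk_mem_rationalPoints_iff (isHomogeneous_linePencil m B),
    eval_linePencil_eq_zero_iff] at hpencil
  obtain ⟨b, hb, hline⟩ := hpencil
  by_cases h0 : w 0 = 0
  · have h1 : w 1 = 0 := by simpa [h0] using hconic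
    have h2 : w 2 = 0 := by simpa [h0, h1] using hline
    exact hw (by ext i; fin_cases i <;> assumption)
  · refine hB b hb (w 1 / w 0) ?_
    field_simp
    linear_combination w 0 * hline - hconic

end ConicAndPencil

section RootlessQuadratics

theorem two_mul_card_image_le_of_involutive {α β : Type*} [Fintype α] [DecidableEq α]
    [DecidableEq β] {τ : α → α} (hτ : τ.Involutive) {g : α → β} (hg : ∀ x, g (τ x) = g x) :
    2 * #(Finset.univ.image g) ≤ Fintype.card α + #{x | τ x = x} := by
  have hmoved : 2 * #(({x | τ x ≠ x} : Finset α).image g) ≤ #{x | τ x ≠ x} := by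
    refine Finset.mul_card_image_le_card _ _ fun c hc ↦ ?_
    obtain ⟨x, hx, rfl⟩ := Finset.mem_image.mp hc
    have hne : x ≠ τ x := (Finset.mem_filter.mp hx).2.symm
    rw [← Finset.card_pair hne]
    refine Finset.card_le_card ?_
    simp [Finset.insert_subset_iff, hg, hτ x, hne, hne.symm]
  have hfixed : #(({x | τ x = x} : Finset α).image g) ≤ #{x | τ x = x} := Finset.card_image_le
  have hsplit := Finset.card_filter_add_card_filter_not (s := Finset.univ) (fun x ↦ τ x = x)
  have himage : #(Finset.univ.image g) ≤
      #(({x | τ x = x} : Finset α).image g) + #(({x | τ x ≠ x} : Finset α).image g) := by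
    grw [← Finset.card_union_le, ← Finset.image_union, Finset.filter_union_filter_not_eq]
  rw [Finset.card_univ] at hsplit
  lia

theorem exists_card_le_two_mul_card_rootless_quadratics (F : Type*) [Field F] [Fintype F] :
    ∃ (m : F) (B : Finset F), Fintype.card F ≤ 2 * #B ∧
      ∀ b ∈ B, ∀ r : F, r ^ 2 + b * r + m ≠ 0 := by
  classical
  -- The fibres of the squaring map `Fˣ → Fˣ` have average size one.
  obtain ⟨m, hm⟩ : ∃ m : Fˣ, #{r : Fˣ | r ^ 2 = m} ≤ 1 :=
    Fintype.exists_card_fiber_le_of_card_le_mul _ (by simp)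
  let g : Fˣ → F := fun r ↦ -(r + m / r)
  have hτ : Function.Involutive fun r : Fˣ ↦ m / r := fun r ↦ by simp
  have hg : ∀ r : Fˣ, g (m / r) = g r := fun r ↦ by
    simp [g, add_comm]
  have hfixed : ∀ r : Fˣ, m / r = r ↔ r ^ 2 = m := fun r ↦ by
    rw [div_eq_iff_eq_mul, sq, eq_comm]
  have hcard := two_mul_card_image_le_of_involutive (g := g) hτ hg
  simp only [hfixed] at hcard
  refine ⟨m, (Finset.univ.image g)ᶜ, ?_, fun b hb r hr ↦ ?_⟩
  · have hunits := Fintype.card_units (α := F)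
    have hpos := Fintype.card_pos (α := F)
    rw [Finset.card_compl]
    lia
  · have hr0 : r ≠ 0 := by
      rintro rfl
      simp at hr
    refine Finset.mem_compl.mp hb (Finset.mem_image.mpr ⟨Units.mk0 r hr0, Finset.mem_univ _, ?_⟩)
    simp only [g, Units.val_mk0]
    field_simp
    linear_combination -hr

end RootlessQuadratics

section FieldExtension

variable {F E : Type*} [Field F] [Field E] [Algebra F E]

theorem linearIndependent_of_algHom {A K ι : Type*} [Ring A] [Algebra F A] [Field K] [Algebra F K]
    [Finite ι] (τ : ι → A →ₐ[F] K) {v : ι → A} (hv : LinearIndependent K fun j i ↦ τ j (v i)) :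
    LinearIndependent F v := by
  classical
  have := Fintype.ofFinite ι
  have hunit : IsUnit (Matrix.of fun j i ↦ τ j (v i)) :=
    Matrix.linearIndependent_rows_iff_isUnit.mp hv
  have hcols : LinearIndependent K fun i j ↦ τ j (v i) :=
    Matrix.linearIndependent_cols_iff_isUnit.mpr hunit
  exact (hcols.restrict_scalars' F).of_comp (LinearMap.pi fun j ↦ (τ j).toLinearMap)

theorem linearIndependent_of_pow_card_pow [Fintype F] {n : ℕ} {v : Fin n → E}
    (hv : LinearIndependent E fun (j : Fin n) i ↦ v i ^ Fintype.card F ^ (j : ℕ)) :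
    LinearIndependent F v :=
  linearIndependent_of_algHom (fun j : Fin n ↦ FiniteField.frobeniusAlgHom F E ^ (j : ℕ)) <| by
    simpa [AlgHom.coe_pow, FiniteField.coe_frobeniusAlgHom, pow_iterate] using hv

theorem exists_isUnit_mulVec_eq_pow [FiniteDimensional F E] [Algebra.IsSeparable F E] {n : ℕ}
    (v : Module.Basis (Fin n) F E) :
    ∃ (M : Matrix (Fin n) (Fin n) F) (θ : E), IsUnit M ∧
      M.map (algebraMap F E) *ᵥ v = fun i : Fin n ↦ θ ^ (i : ℕ) := by
  let pb := Field.powerBasisOfFiniteOfSeparable F E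
  have hdim : pb.dim = n := by rw [← pb.finrank, Module.finrank_eq_card_basis v, Fintype.card_fin]
  let w := pb.basis.reindex (finCongr hdim)
  have hw : ⇑w = fun i : Fin n ↦ pb.gen ^ (i : ℕ) := by
    ext i
    simp [w]
  refine ⟨(v.toMatrix w)ᵀ, pb.gen, ?_, ?_⟩
  · rw [Matrix.isUnit_transpose]
    let := v.invertibleToMatrix w
    exact isUnit_of_invertible _
  · rw [Matrix.transpose_map, Matrix.mulVec_transpose, Module.Basis.toMatrix_map_vecMul, hw]

end FieldExtension

theorem stmt_17_general {F E : Type*} [Field F] [Fintype F] [Field E] [Algebra F E]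
    (hE : Module.finrank F E = 3) {v : Fin 3 → E} (hv : LinearIndependent F v)
    {k : ℕ} (hk : 0 < k) (hkq : 2 * k ≤ Fintype.card F + 1) :
    ∃ f : MvPolynomial (Fin 3) F, f ≠ 0 ∧ f.IsHomogeneous (k + 2) ∧ aeval v f = 0 ∧
      (rationalPoints f).ncard = (k + 1) * Fintype.card F + 2 := by
  have : FiniteDimensional F E := .of_finrank_pos (by lia)
  let basis := basisOfLinearIndependentOfCardEqFinrank hv (by simp [hE])
  obtain ⟨M, θ, hM, hθ⟩ := exists_isUnit_mulVec_eq_pow basis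
  rw [coe_basisOfLinearIndependentOfCardEqFinrank] at hθ
  obtain ⟨m, B₀, hB₀, hroot⟩ := exists_card_le_two_mul_card_rootless_quadratics F
  obtain ⟨B, hBB₀, rfl⟩ := Finset.exists_subset_card_eq (show k ≤ #B₀ by lia)
  have hhom := (isHomogeneous_linePencil m B).mul isHomogeneous_standardConic
  refine ⟨bind₁ M.toMvPolynomial (linePencil m B * standardConic F), ?_,
    isHomogeneous_bind₁_toMvPolynomial M hhom, ?_, ?_⟩
  · exact (map_ne_zero_iff _ (bind₁_toMvPolynomial_injective hM)).mpr
      (mul_ne_zero (linePencil_ne_zero m B) standardConic_ne_zero)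
  · rw [aeval_bind₁_toMvPolynomial, hθ, map_mul, aeval_pow_standardConic, mul_zero]
  · have hdisj := disjoint_rationalPoints_standardConic_linePencil fun b hb ↦ hroot b (hBB₀ hb)
    rw [ncard_rationalPoints_bind₁_toMvPolynomial hM hhom, rationalPoints_mul,
      Set.ncard_union_eq hdisj.symm, ncard_rationalPoints_standardConic,
      ncard_rationalPoints_linePencil m (Finset.card_pos.mp hk)]
    ring

/-- For `q ≥ 5`, the bound `4q + 2` is attained by some plane quintic over `F_q` passing
through the degree-3 closed point. -/
theorem stmt_17 (q : ℕ) (hq : IsPrimePow q) (hq5 : 5 ≤ q)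
    (F E : Type) [Field F] [Fintype F] [Field E] [Fintype E] [Algebra F E]
    (hF : Fintype.card F = q) (hE : Fintype.card E = q ^ 3)
    -- `v` represents a degree-3 closed point of `P²`: its three Frobenius conjugates are
    -- pairwise distinct and non-collinear (equivalently, linearly independent).
    (v : Fin 3 → E)
    (hv : LinearIndependent E ![v, fun i => v i ^ q, fun i => v i ^ q ^ 2]) :
    ∃ f : MvPolynomial (Fin 3) F, f ≠ 0 ∧ f.IsHomogeneous 5 ∧
      MvPolynomial.aeval v f = 0 ∧
      {x : Projectivization F (Fin 3 → F) | MvPolynomial.eval x.rep f = 0}.ncard = 4 * q + 2 := by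
  subst hF
  have hfinrank : Module.finrank F E = 3 :=
    Nat.pow_right_injective Fintype.one_lt_card (Module.card_eq_pow_finrank.symm.trans hE)
  have hvF : LinearIndependent F v := linearIndependent_of_pow_card_pow <| by
    convert hv using 1
    ext j i
    fin_cases j <;> simp
  exact stmt_17_general hfinrank hvF three_pos (by lia)
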